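/- Let D be an ADF and let v be a strongly admissible interpretation of D. Then v is an admissible interpretation of D, i.e., v ≤_i Γ_D(v). -/

import Mathlib

/-! The set `P` witnessing that `a` is strongly acceptable (deniable) makes `φ_a` irrefutable
(unsatisfiable) under `v|_P`. Both properties persist when information is added, because a more
informative interpretation has fewer completions; as `v|_P ≤_i v`, they hold under `v` itself, so
`Γ_D(v)(a) = v(a)`. Since `Γ_D` tests irrefutability first, the deniable case also needs that `φ_a`
is not both irrefutable and unsatisfiable, which holds because `v` has a completion. -/

/-- Three truth values: true, false, undecided. -/
inductive TV : Type
  | t | f | u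
deriving DecidableEq, Repr

/-- The information order on truth values: u <_i t and u <_i f. -/
def TV.ile (x y : TV) : Prop := x = TV.u ∨ x = y

/-- The information order on interpretations, extended pointwise. -/
def ILE {A : Type*} (v w : A → TV) : Prop := ∀ a, TV.ile (v a) (w a)

/-- An abstract dialectical framework on a set of arguments `A`:
each argument `a` has an acceptance condition `C a : (A → Bool) → Bool`. -/
structure ADF (A : Type*) where
  C : A → (A → Bool) → Bool

/-- The trivial interpretation mapping every argument to undecided. -/
def trivialInterp (A : Type*) : A → TV := fun _ => TV.u

/-- The parents of `a` are the arguments on which its acceptance condition depends. -/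
def ADF.parents {A : Type*} [DecidableEq A] (D : ADF A) (a : A) : Set A :=
  {b | ∃ w : A → Bool, D.C a w ≠ D.C a (Function.update w b (!w b))}

/-- A two-valued assignment `w` completes a three-valued interpretation `v`. -/
def Completes {A : Type*} (w : A → Bool) (v : A → TV) : Prop :=
  ∀ b, (v b = TV.t → w b = true) ∧ (v b = TV.f → w b = false)

/-- `φ` is irrefutable under `v`: every completion of `v` makes `φ` true. -/
def Irrefutable {A : Type*} (φ : (A → Bool) → Bool) (v : A → TV) : Prop :=
  ∀ w : A → Bool, Completes w v → φ w = true

/-- `φ` is unsatisfiable under `v`: every completion of `v` makes `φ` false. -/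
def Unsat {A : Type*} (φ : (A → Bool) → Bool) (v : A → TV) : Prop :=
  ∀ w : A → Bool, Completes w v → φ w = false

open Classical in
/-- The characteristic operator Γ_D of an ADF. -/
noncomputable def Gamma {A : Type*} (D : ADF A) (v : A → TV) : A → TV := fun a =>
  if Irrefutable (D.C a) v then TV.t
  else if Unsat (D.C a) v then TV.f
  else TV.u

open Classical in
/-- `v|_P`: agrees with `v` on `P` and is undecided elsewhere. -/
noncomputable def restrictTV {A : Type*} (v : A → TV) (P : Set A) : A → TV :=
  fun b => if b ∈ P then v b else TV.u

/-- Strong acceptability/deniability of an argument with respect to interpretation `v`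
and set `S`, relative to an excluded set `E` (the first index). An argument `a` with
`v a = t` (resp. `v a = f`) is strongly acceptable (resp. strongly deniable) iff there is
`P ⊆ (parents a ∩ S) \ E` with `φ_a^{v|_P}` irrefutable (resp. unsatisfiable) and every
`p ∈ P` strongly acceptable/deniable relative to `E ∪ {p}`. -/
inductive SJrel {A : Type*} [DecidableEq A] (D : ADF A) (v : A → TV) (S : Set A) :
    Set A → A → Prop
  | acc (E : Set A) (a : A) (P : Set A)
      (ha : v a = TV.t)
      (hP : P ⊆ (D.parents a ∩ S) \ E)
      (hirr : Irrefutable (D.C a) (restrictTV v P))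
      (hrec : ∀ p ∈ P, SJrel D v S (E ∪ {p}) p) : SJrel D v S E a
  | den (E : Set A) (a : A) (P : Set A)
      (ha : v a = TV.f)
      (hP : P ⊆ (D.parents a ∩ S) \ E)
      (hunsat : Unsat (D.C a) (restrictTV v P))
      (hrec : ∀ p ∈ P, SJrel D v S (E ∪ {p}) p) : SJrel D v S E a

/-- `a` is strongly acceptable/deniable w.r.t. `v` and `S`
(i.e., relative to the excluded set `{a}`). -/
def StronglyJustified {A : Type*} [DecidableEq A] (D : ADF A) (v : A → TV)
    (S : Set A) (a : A) : Prop :=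
  SJrel D v S {a} a

/-- `S` is a least set for `a` with respect to `v`. -/
def LeastSet {A : Type*} [DecidableEq A] (D : ADF A) (v : A → TV)
    (a : A) (S : Set A) : Prop :=
  StronglyJustified D v S a ∧
  ∀ S' : Set A, S'.ncard < S.ncard → ¬ StronglyJustified D v S' a

/-- An interpretation is strongly admissible iff every argument assigned `t`/`f`
is strongly acceptable/deniable w.r.t. `v` and some set `S`. -/
def StronglyAdmissible {A : Type*} [DecidableEq A] (D : ADF A) (v : A → TV) : Prop :=
  ∀ a : A, v a ≠ TV.u → ∃ S : Set A, StronglyJustified D v S a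

/-- `g` is the grounded interpretation of `D`: the least fixed point of `Γ_D`. -/
def IsGrounded {A : Type*} (D : ADF A) (g : A → TV) : Prop :=
  Gamma D g = g ∧ ∀ w : A → TV, Gamma D w = w → ILE g w

/-- An interpretation is admissible iff `v ≤_i Γ_D(v)`. -/
def Admissible {A : Type*} (D : ADF A) (v : A → TV) : Prop :=
  ILE v (Gamma D v)

/-- An interpretation is conflict-free. -/
def ConflictFree {A : Type*} (D : ADF A) (v : A → TV) : Prop :=
  ∀ a : A, (v a = TV.t → ∃ w : A → Bool, Completes w v ∧ D.C a w = true) ∧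
           (v a = TV.f → Unsat (D.C a) v)

/-- The join of two interpretations: take `v`'s value where defined, else `w`'s. -/
def joinI {A : Type*} (v w : A → TV) : A → TV :=
  fun a => if v a = TV.u then w a else v a

section

variable {A : Type*} {v v' : A → TV}

theorem restrictTV_ile (v : A → TV) (P : Set A) : ILE (restrictTV v P) v := by
  intro b
  by_cases hb : b ∈ P
  · exact Or.inr (if_pos hb)
  · exact Or.inl (if_neg hb)

theorem Completes.anti {w : A → Bool} (hw : Completes w v') (h : ILE v v') : Completes w v := by
  intro b
  rcases h b with hu | heq
  · simp [hu]
  · simpa only [heq] using hw b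

theorem exists_completes (v : A → TV) : ∃ w : A → Bool, Completes w v :=
  ⟨fun b => decide (v b = TV.t), fun b => by cases h : v b <;> simp [h]⟩

theorem Irrefutable.mono {φ : (A → Bool) → Bool} (hφ : Irrefutable φ v) (h : ILE v v') :
    Irrefutable φ v' :=
  fun w hw => hφ w (hw.anti h)

theorem Unsat.mono {φ : (A → Bool) → Bool} (hφ : Unsat φ v) (h : ILE v v') : Unsat φ v' :=
  fun w hw => hφ w (hw.anti h)

theorem Unsat.not_irrefutable {φ : (A → Bool) → Bool} (hφ : Unsat φ v) : ¬ Irrefutable φ v := by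
  intro hirr
  obtain ⟨w, hw⟩ := exists_completes v
  exact Bool.false_ne_true ((hφ w hw).symm.trans (hirr w hw))

theorem Irrefutable.gamma_eq_t {D : ADF A} {a : A} (h : Irrefutable (D.C a) v) :
    Gamma D v a = TV.t :=
  if_pos h

theorem Unsat.gamma_eq_f {D : ADF A} {a : A} (h : Unsat (D.C a) v) : Gamma D v a = TV.f :=
  (if_neg h.not_irrefutable).trans (if_pos h)

theorem SJrel.eq_gamma [DecidableEq A] {D : ADF A} {S E : Set A} {a : A}
    (h : SJrel D v S E a) : v a = Gamma D v a := by
  cases h with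
  | acc _ _ P ha _ hirr _ => exact ha.trans (hirr.mono (restrictTV_ile v P)).gamma_eq_t.symm
  | den _ _ P ha _ hunsat _ => exact ha.trans (hunsat.mono (restrictTV_ile v P)).gamma_eq_f.symm

end

theorem strongly_admissible_is_admissible_general {A : Type*} [DecidableEq A]
    (D : ADF A) (v : A → TV) (hv : StronglyAdmissible D v) :
    Admissible D v := by
  intro a
  by_cases hu : v a = TV.u
  · exact Or.inl hu
  · obtain ⟨S, hS⟩ := hv a hu
    exact Or.inr (SJrel.eq_gamma hS)

/-- Every strongly admissible interpretation is admissible. -/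
theorem strongly_admissible_is_admissible {A : Type*} [Fintype A] [DecidableEq A]
    (D : ADF A) (v : A → TV) (hv : StronglyAdmissible D v) :
    Admissible D v :=
  strongly_admissible_is_admissible_general D v hv
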